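/- Let d ≥ 1 and α > 0. Assume c₁,…,c_d > 0 satisfy ∏_{i=1}^d c_i = 1 and not all c_i equal 1. Define Q(t) = ∏_{i=1}^{d} θ₂(c_i^t α)/θ₃(c_i^t α) for t ∈ ℝ. Then Q'(0) = 0, Q'(t) > 0 for t < 0, and Q'(t) < 0 for t > 0; in particular t = 0 is the unique strict maximum of Q. (This expresses the maximality of the simple cubic lattice among orthorhombic lattices for the periodic Gaussian function with translation to the center of the unit cell.) -/

import Mathlib

/-!
Poisson summation gives `θ₂(x) / θ₃(x) = θ₄(1/x) / θ₃(1/x)`, and the Jacobi triple product turns the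
right-hand side into `∏ tanh² ((2k+1)π / (2x))`. For `φ(s) = log (θ₂(e^s) / θ₃(e^s))` this yields
`φ'(s) = -2 ∑ w_k / sinh w_k` with `w_k = (2k+1)π e^{-s}`, which is strictly decreasing in `s`
because `w / sinh w` is strictly decreasing on `(0, ∞)`. Now `log Q(t) = ∑ φ(t log c_i + log α)` has
the strictly decreasing derivative `∑ φ'(t log c_i + log α) log c_i`, which at `t = 0` equals
`φ'(log α) ∑ log c_i = 0`.

The triple product is the limit `n → ∞` of its finite form, the `q`-binomial theorem centred at the
middle coefficient: the Gaussian binomials `[2n, n+j]` are bounded uniformly in `n` and `j` and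
converge to `∏ (1 - q^k)⁻¹`, so Tannery's theorem applies to the sum over `j`.
-/

open scoped BigOperators

/-- The classical Jacobi theta function `θ₂(x) = Σ_{k∈ℤ} e^{−π(k+1/2)²x}`. -/
noncomputable def theta2 (x : ℝ) : ℝ :=
  ∑' n : ℤ, Real.exp (-Real.pi * ((n : ℝ) + 1 / 2) ^ 2 * x)

/-- The classical Jacobi theta function `θ₃(x) = Σ_{k∈ℤ} e^{−πk²x}`. -/
noncomputable def theta3 (x : ℝ) : ℝ :=
  ∑' n : ℤ, Real.exp (-Real.pi * (n : ℝ) ^ 2 * x)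

open Filter Finset Topology

/-! ### Gaussian binomial coefficients -/

/-- The Gaussian binomial coefficient `[n, k]_q`, defined by the `q`-Pascal rule rather than as a
quotient so that it makes sense over any semiring and for every `q`. -/
def qBinom {R : Type*} [Semiring R] (q : R) : ℕ → ℕ → R
  | _, 0 => 1
  | 0, _ + 1 => 0
  | n + 1, k + 1 => qBinom q n k + q ^ (k + 1) * qBinom q n (k + 1)

/-- The `q`-Pochhammer symbol `(q; q)ₙ = (1 - q) ⋯ (1 - qⁿ)`, the analogue of the factorial in the
quotient formula for `qBinom`. -/
def qPochhammer {R : Type*} [CommRing R] (q : R) (n : ℕ) : R :=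
  ∏ i ∈ range n, (1 - q ^ (i + 1))

lemma qPochhammer_succ {R : Type*} [CommRing R] (q : R) (n : ℕ) :
    qPochhammer q (n + 1) = qPochhammer q n * (1 - q ^ (n + 1)) :=
  prod_range_succ _ _

section Semiring

variable {R : Type*} [Semiring R] (q : R)

@[simp]
lemma qBinom_zero_right (n : ℕ) : qBinom q n 0 = 1 := by
  cases n <;> rfl

lemma qBinom_succ_succ (n k : ℕ) :
    qBinom q (n + 1) (k + 1) = qBinom q n k + q ^ (k + 1) * qBinom q n (k + 1) :=
  rfl

lemma qBinom_eq_zero_of_lt {n k : ℕ} (h : n < k) : qBinom q n k = 0 := by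
  induction n generalizing k with
  | zero => obtain ⟨k, rfl⟩ := Nat.exists_eq_succ_of_ne_zero h.ne'; rfl
  | succ n ih =>
    obtain ⟨k, rfl⟩ := Nat.exists_eq_succ_of_ne_zero (Nat.ne_zero_of_lt h)
    rw [Nat.succ_eq_add_one, qBinom_succ_succ, ih (by lia), ih (by lia), mul_zero, add_zero]

lemma qBinom_self (n : ℕ) : qBinom q n n = 1 := by
  induction n with
  | zero => rfl
  | succ n ih =>
    rw [qBinom_succ_succ, ih, qBinom_eq_zero_of_lt q n.lt_succ_self, mul_zero, add_zero]

end Semiring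

lemma sum_qBinom_succ_mul {R : Type*} [CommSemiring R] (q : R) (n : ℕ) (c : ℕ → R) :
    ∑ i ∈ range (n + 2), qBinom q (n + 1) i * c i =
      ∑ i ∈ range (n + 1), qBinom q n i * (q ^ i * c i + c (i + 1)) := by
  have hshift : ∑ i ∈ range (n + 1), qBinom q n (i + 1) * (q ^ (i + 1) * c (i + 1)) + c 0 =
      ∑ i ∈ range (n + 1), qBinom q n i * (q ^ i * c i) := by
    rw [sum_range_succ, sum_range_succ' _ n, qBinom_eq_zero_of_lt q n.lt_succ_self]
    simp
  simp only [mul_add, sum_add_distrib]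
  rw [sum_range_succ', ← hshift, qBinom_zero_right, one_mul, add_right_comm, ← sum_add_distrib]
  congr 1
  exact sum_congr rfl fun i _ => by rw [qBinom_succ_succ]; ring

/-- The `q`-binomial theorem. -/
lemma prod_one_add_mul_pow {R : Type*} [CommSemiring R] (q x : R) (n : ℕ) :
    ∏ k ∈ range n, (1 + x * q ^ k) =
      ∑ i ∈ range (n + 1), qBinom q n i * (q ^ i.choose 2 * x ^ i) := by
  induction n generalizing x with
  | zero => simp
  | succ n ih =>
    have hfactor : ∏ k ∈ range n, (1 + x * q ^ (k + 1)) = ∏ k ∈ range n, (1 + x * q * q ^ k) :=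
      prod_congr rfl fun k _ => by ring
    rw [prod_range_succ', hfactor, ih, sum_qBinom_succ_mul, sum_mul]
    refine sum_congr rfl fun i _ => ?_
    rw [Nat.choose_succ_succ', Nat.choose_one_right]
    ring

lemma two_mul_choose_two_add_self (n : ℕ) : 2 * n.choose 2 + n = n ^ 2 := by
  induction n with
  | zero => rfl
  | succ n ih =>
    rw [Nat.choose_succ_succ', Nat.choose_one_right]
    linarith

/-- The finite Jacobi triple product, multiplied by `z ^ n` so that no inverse of `z` occurs. -/
lemma prod_one_add_mul_prod_add {R : Type*} [CommSemiring R] (q z : R) (m n : ℕ) :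
    (∏ k ∈ range m, (1 + z * q ^ (2 * k + 1))) * ∏ k ∈ range n, (z + q ^ (2 * k + 1)) =
      ∑ i ∈ range (m + n + 1),
        qBinom (q ^ 2) (m + n) i * (q ^ (i - n : ℤ).natAbs ^ 2 * z ^ i) := by
  induction n with
  | zero =>
    have hbase : ∏ k ∈ range m, (1 + z * q ^ (2 * k + 1)) =
        ∏ k ∈ range m, (1 + z * q * (q ^ 2) ^ k) :=
      prod_congr rfl fun k _ => by ring
    rw [prod_range_zero, mul_one, hbase, prod_one_add_mul_pow]
    refine sum_congr rfl fun i _ => ?_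
    rw [Nat.cast_zero, sub_zero, Int.natAbs_natCast, ← two_mul_choose_two_add_self, add_zero]
    ring
  | succ n ih =>
    rw [prod_range_succ, ← mul_assoc, ih, ← add_assoc, sum_qBinom_succ_mul, sum_mul]
    refine sum_congr rfl fun i _ => ?_
    have hexp : 2 * i + (i - (n + 1 : ℕ) : ℤ).natAbs ^ 2 =
        (i - n : ℤ).natAbs ^ 2 + (2 * n + 1) := by
      zify
      simp only [sq_abs]
      ring
    have hsucc : ((i + 1 : ℕ) : ℤ) - (n + 1 : ℕ) = i - n := by push_cast; ring
    rw [hsucc, ← pow_mul, ← mul_assoc (q ^ (2 * i)), ← pow_add, hexp]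
    ring

lemma qBinom_mul_qPochhammer {R : Type*} [CommRing R] (q : R) (k l : ℕ) :
    qBinom q (k + l) k * (qPochhammer q k * qPochhammer q l) = qPochhammer q (k + l) := by
  induction k generalizing l with
  | zero => simp [qPochhammer]
  | succ k ihk =>
    induction l with
    | zero => simp [qPochhammer, qBinom_self]
    | succ l ihl =>
      have hk := ihk (l + 1)
      rw [← add_assoc (k + 1), qBinom_succ_succ, qPochhammer_succ q (k + 1 + l)]
      rw [show k + (l + 1) = k + 1 + l by ring] at hk
      rw [qPochhammer_succ q l] at hk ⊢
      rw [qPochhammer_succ q k] at ihl ⊢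
      linear_combination (1 - q ^ (k + 1)) * hk + q ^ (k + 1) * (1 - q ^ (l + 1)) * ihl

/-! ### The Jacobi triple product -/

section Limit

variable {𝕜 : Type*} [NormedField 𝕜] {q : 𝕜}

lemma one_sub_pow_ne_zero (hq : ‖q‖ < 1) {n : ℕ} (hn : n ≠ 0) : 1 - q ^ n ≠ 0 := by
  intro h
  have : ‖q ^ n‖ < 1 := by simpa using pow_lt_one₀ (norm_nonneg q) hq hn
  rw [← sub_eq_zero.1 h, norm_one] at this
  exact this.false

lemma qPochhammer_ne_zero (hq : ‖q‖ < 1) (n : ℕ) : qPochhammer q n ≠ 0 :=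
  prod_ne_zero_iff.2 fun i _ => one_sub_pow_ne_zero hq i.succ_ne_zero

lemma qBinom_eq_div (hq : ‖q‖ < 1) (k l : ℕ) :
    qBinom q (k + l) k = qPochhammer q (k + l) / (qPochhammer q k * qPochhammer q l) :=
  eq_div_of_mul_eq (mul_ne_zero (qPochhammer_ne_zero hq k) (qPochhammer_ne_zero hq l))
    (qBinom_mul_qPochhammer q k l)

lemma summable_norm_mul_pow_of_injective (hq : ‖q‖ < 1) (c : 𝕜) {e : ℕ → ℕ} (he : e.Injective) :
    Summable fun k => ‖c * q ^ e k‖ := by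
  simp_rw [norm_mul, norm_pow]
  exact ((summable_geometric_of_lt_one (norm_nonneg q) hq).comp_injective he).mul_left _

lemma summable_norm_pow_sq_mul_zpow (hq : ‖q‖ < 1) (z : 𝕜) :
    Summable fun j : ℤ => ‖q ^ j.natAbs ^ 2 * z ^ j‖ := by
  have hnat (w : 𝕜) : Summable fun n : ℕ => ‖q ^ n ^ 2 * w ^ n‖ := by
    have hratio : Tendsto (fun n : ℕ => ‖q ^ (2 * n + 1) * w‖) atTop (𝓝 0) := by
      have := (tendsto_pow_atTop_nhds_zero_of_norm_lt_one hq).comp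
        (tendsto_atTop_mono (fun n => (by lia : n ≤ 2 * n + 1)) tendsto_id)
      simpa using (this.mul_const w).norm
    refine summable_of_ratio_norm_eventually_le (r := 1 / 2) (by norm_num) ?_
    filter_upwards [hratio.eventually_le_const (by norm_num : (0 : ℝ) < 1 / 2)] with n hn
    rw [norm_norm, norm_norm, show q ^ (n + 1) ^ 2 * w ^ (n + 1) =
      q ^ (2 * n + 1) * w * (q ^ n ^ 2 * w ^ n) by ring, norm_mul]
    gcongr
  exact .of_nat_of_neg (by simpa using hnat z) (by simpa using hnat z⁻¹)

/-- The indicator is needed because `toNat` sends `n + j < 0` to `0`, where `qBinom` is `1`. -/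
lemma prod_one_add_mul_one_add_inv_eq_tsum (q : 𝕜) {z : 𝕜} (hz : z ≠ 0) (n : ℕ) :
    ∏ k ∈ range n, ((1 + z * q ^ (2 * k + 1)) * (1 + z⁻¹ * q ^ (2 * k + 1))) =
      ∑' j : ℤ, (Set.Ici (-n : ℤ)).indicator
        (fun j => qBinom (q ^ 2) (2 * n) (n + j).toNat * (q ^ j.natAbs ^ 2 * z ^ j)) j := by
  have hinv : ∏ k ∈ range n, (z + q ^ (2 * k + 1)) =
      z ^ n * ∏ k ∈ range n, (1 + z⁻¹ * q ^ (2 * k + 1)) := by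
    rw [← card_range n, ← prod_const, card_range, ← prod_mul_distrib]
    exact prod_congr rfl fun k _ => by field_simp
  have hshift : Function.Injective fun i : ℕ => (i - n : ℤ) := fun i j h => by simpa using h
  rw [prod_mul_distrib, ← mul_right_inj' (pow_ne_zero n hz), mul_left_comm, ← hinv,
    prod_one_add_mul_prod_add, tsum_eq_sum (s := (range (2 * n + 1)).map ⟨_, hshift⟩), sum_map,
    ← two_mul, mul_sum]
  · refine sum_congr rfl fun i _ => ?_
    have hmem : (i - n : ℤ) ∈ Set.Ici (-n : ℤ) := by simp
    have hcancel : z ^ n * z ^ (i - n : ℤ) = z ^ i := by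
      rw [← zpow_natCast, ← zpow_natCast, ← zpow_add₀ hz, add_sub_cancel]
    rw [Function.Embedding.coeFn_mk, Set.indicator_of_mem hmem, add_sub_cancel, Int.toNat_natCast,
      ← hcancel]
    ring
  · intro j hj
    refine Set.indicator_apply_eq_zero.2 fun hmem => ?_
    rw [Set.mem_Ici] at hmem
    have hlt : 2 * n < (n + j).toNat := by
      by_contra! hle
      exact hj (mem_map.2 ⟨(n + j).toNat, by simpa [Nat.lt_succ_iff] using hle,
        by simp [Int.toNat_of_nonneg (by lia : (0 : ℤ) ≤ n + j)]⟩)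
    rw [qBinom_eq_zero_of_lt _ hlt, zero_mul]

variable [CompleteSpace 𝕜]

lemma multipliable_one_add_mul_pow_of_injective (hq : ‖q‖ < 1) (c : 𝕜) {e : ℕ → ℕ}
    (he : e.Injective) : Multipliable fun k => 1 + c * q ^ e k :=
  multipliable_one_add_of_summable (summable_norm_mul_pow_of_injective hq c he)

lemma tendsto_qPochhammer (hq : ‖q‖ < 1) :
    Tendsto (qPochhammer q) atTop (𝓝 (∏' k : ℕ, (1 - q ^ (k + 1)))) := by
  have h := multipliable_one_add_mul_pow_of_injective hq (-1) (add_left_injective 1)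
  simp only [neg_one_mul, ← sub_eq_add_neg] at h
  exact h.hasProd.tendsto_prod_nat

lemma tprod_one_sub_pow_ne_zero (hq : ‖q‖ < 1) : ∏' k : ℕ, (1 - q ^ (k + 1)) ≠ 0 := by
  have h := tprod_one_add_ne_zero_of_summable (f := fun k => -1 * q ^ (k + 1))
    (fun k => by simpa [← sub_eq_add_neg] using one_sub_pow_ne_zero hq k.succ_ne_zero)
    (summable_norm_mul_pow_of_injective hq (-1) (add_left_injective 1))
  simpa only [neg_one_mul, ← sub_eq_add_neg] using h

lemma exists_norm_qBinom_le (hq : ‖q‖ < 1) : ∃ C, ∀ n k, ‖qBinom q n k‖ ≤ C := by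
  obtain ⟨A, hA⟩ := (tendsto_qPochhammer hq).norm.bddAbove_range
  obtain ⟨B, hB⟩ :=
    ((tendsto_qPochhammer hq).inv₀ (tprod_one_sub_pow_ne_zero hq)).norm.bddAbove_range
  have norm_le (n) : ‖qPochhammer q n‖ ≤ A := hA (Set.mem_range_self n)
  have norm_inv_le (n) : ‖(qPochhammer q n)⁻¹‖ ≤ B := hB (Set.mem_range_self n)
  have hA₀ : 0 ≤ A := (norm_nonneg _).trans (norm_le 0)
  have hB₀ : 0 ≤ B := (norm_nonneg _).trans (norm_inv_le 0)
  refine ⟨A * (B * B), fun n k => ?_⟩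
  rcases le_or_gt k n with h | h
  · obtain ⟨l, rfl⟩ := Nat.exists_eq_add_of_le h
    rw [qBinom_eq_div hq, div_eq_mul_inv, mul_inv, norm_mul, norm_mul]
    gcongr
    exacts [norm_le _, norm_inv_le _, norm_inv_le _]
  · rw [qBinom_eq_zero_of_lt q h, norm_zero]
    positivity

lemma tendsto_qBinom_central (hq : ‖q‖ < 1) (j : ℤ) :
    Tendsto (fun n : ℕ => qBinom q (2 * n) (n + j).toNat) atTop
      (𝓝 (∏' k : ℕ, (1 - q ^ (k + 1)))⁻¹) := by
  have hP := tendsto_qPochhammer hq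
  have hP₀ := tprod_one_sub_pow_ne_zero hq
  have hshift (i : ℤ) : Tendsto (fun n : ℕ => (n + i).toNat) atTop atTop :=
    tendsto_atTop_atTop.2 fun b => ⟨b + i.natAbs, fun n hn => by lia⟩
  have hlim := (hP.comp (tendsto_id.const_mul_atTop' two_pos)).div
    ((hP.comp (hshift j)).mul (hP.comp (hshift (-j)))) (mul_ne_zero hP₀ hP₀)
  rw [div_mul_cancel_left₀ hP₀] at hlim
  refine hlim.congr' ?_
  filter_upwards [eventually_ge_atTop j.natAbs] with n hn
  have hsum : 2 * n = (n + j).toNat + (n + -j).toNat := by lia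
  simp only [Pi.div_apply, Function.comp_apply, id]
  rw [hsum, qBinom_eq_div hq]

lemma tendsto_prod_one_add_mul_one_add_inv (hq : ‖q‖ < 1) {z : 𝕜} (hz : z ≠ 0) :
    Tendsto (fun n : ℕ =>
        ∏ k ∈ range n, ((1 + z * q ^ (2 * k + 1)) * (1 + z⁻¹ * q ^ (2 * k + 1)))) atTop
      (𝓝 (∑' j : ℤ, (∏' k : ℕ, (1 - (q ^ 2) ^ (k + 1)))⁻¹ * (q ^ j.natAbs ^ 2 * z ^ j))) := by
  have hq2 : ‖q ^ 2‖ < 1 := by simpa using pow_lt_one₀ (norm_nonneg q) hq two_ne_zero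
  obtain ⟨C, hC⟩ := exists_norm_qBinom_le hq2
  simp_rw [prod_one_add_mul_one_add_inv_eq_tsum q hz]
  refine tendsto_tsum_of_dominated_convergence
    ((summable_norm_pow_sq_mul_zpow hq z).mul_left C) (fun j => ?_) (.of_forall fun n j => ?_)
  · refine ((tendsto_qBinom_central hq2 j).mul_const _).congr' ?_
    filter_upwards [eventually_ge_atTop j.natAbs] with n hn
    rw [Set.indicator_of_mem (by rw [Set.mem_Ici]; lia)]
  · refine (norm_indicator_le_norm_self _ _).trans ?_
    rw [norm_mul]
    gcongr
    exact hC _ _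

theorem hasProd_jacobi_triple_product (hq : ‖q‖ < 1) {z : 𝕜} (hz : z ≠ 0) :
    HasProd (fun k : ℕ => (1 - q ^ (2 * (k + 1))) *
        ((1 + z * q ^ (2 * k + 1)) * (1 + z⁻¹ * q ^ (2 * k + 1))))
      (∑' j : ℤ, q ^ j.natAbs ^ 2 * z ^ j) := by
  have hq2 : ‖q ^ 2‖ < 1 := by simpa using pow_lt_one₀ (norm_nonneg q) hq two_ne_zero
  have hodd : Function.Injective fun k => 2 * k + 1 := fun a b h => by simpa using h
  have heven : Function.Injective fun k => 2 * (k + 1) := fun a b h => by simpa using h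
  have hmult := (multipliable_one_add_mul_pow_of_injective hq (-1) heven).mul
    ((multipliable_one_add_mul_pow_of_injective hq z hodd).mul
      (multipliable_one_add_mul_pow_of_injective hq z⁻¹ hodd))
  simp only [neg_one_mul, ← sub_eq_add_neg] at hmult
  have hlim := (tendsto_qPochhammer hq2).mul (tendsto_prod_one_add_mul_one_add_inv hq hz)
  rw [tsum_mul_left, mul_inv_cancel_left₀ (tprod_one_sub_pow_ne_zero hq2)] at hlim
  simp_rw [qPochhammer, ← prod_mul_distrib, ← pow_mul] at hlim
  rw [← tendsto_nhds_unique hmult.hasProd.tendsto_prod_nat hlim]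
  exact hmult.hasProd

end Limit

/-! ### Theta functions -/

section Theta

open HurwitzZeta

lemma theta2_eq_evenKernel {x : ℝ} (hx : 0 < x) : theta2 x = evenKernel (1 / 2 : ℝ) x := by
  exact_mod_cast (hasSum_int_evenKernel (1 / 2) hx).tsum_eq

lemma theta3_eq_evenKernel {x : ℝ} (hx : 0 < x) : theta3 x = evenKernel (0 : ℝ) x := by
  simpa [theta3] using (hasSum_int_evenKernel 0 hx).tsum_eq

lemma theta2_pos {x : ℝ} (hx : 0 < x) : 0 < theta2 x := by
  have h := (hasSum_int_evenKernel (1 / 2) hx).summable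
  exact h.tsum_pos (fun n => (Real.exp_pos _).le) 0 (Real.exp_pos _)

lemma theta3_pos {x : ℝ} (hx : 0 < x) : 0 < theta3 x := by
  have h := (hasSum_int_evenKernel 0 hx).summable
  simp only [add_zero] at h
  exact h.tsum_pos (fun n => (Real.exp_pos _).le) 0 (Real.exp_pos _)

lemma norm_exp_neg_pi_mul_lt_one {t : ℝ} (ht : 0 < t) : ‖Real.exp (-Real.pi * t)‖ < 1 := by
  rw [Real.norm_of_nonneg (Real.exp_pos _).le, Real.exp_lt_one_iff, neg_mul, neg_lt_zero]
  positivity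

lemma tsum_pow_sq_mul_zpow_eq_cosKernel (a : ℝ) {t : ℝ} (ht : 0 < t) :
    ∑' j : ℤ, (Real.exp (-Real.pi * t) : ℂ) ^ j.natAbs ^ 2 *
      Complex.exp (2 * Real.pi * Complex.I * a) ^ j = cosKernel a t := by
  rw [← (hasSum_int_cosKernel a ht).tsum_eq]
  refine tsum_congr fun j => ?_
  have hsq : ((j.natAbs ^ 2 : ℕ) : ℝ) = (j : ℝ) ^ 2 := by
    push_cast [Nat.cast_natAbs]
    exact sq_abs _
  rw [mul_comm, ← Complex.exp_int_mul, ← Complex.ofReal_pow, ← Real.exp_nat_mul, hsq]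
  ring_nf

/-- The factors of the Jacobi triple product at `z = e^{2πia}`, `q = e^{-πt}`. -/
lemma hasProd_cosKernel (a : ℝ) {t : ℝ} (ht : 0 < t) :
    HasProd (fun k : ℕ => (1 - Real.exp (-Real.pi * t) ^ (2 * (k + 1))) *
        (1 + 2 * Real.cos (2 * Real.pi * a) * Real.exp (-Real.pi * t) ^ (2 * k + 1) +
          (Real.exp (-Real.pi * t) ^ (2 * k + 1)) ^ 2))
      (cosKernel a t) := by
  have hq : ‖(Real.exp (-Real.pi * t) : ℂ)‖ < 1 := by
    rw [Complex.norm_real]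
    exact norm_exp_neg_pi_mul_lt_one ht
  have hz := Complex.exp_ne_zero (2 * Real.pi * Complex.I * a)
  have htriple := hasProd_jacobi_triple_product hq hz
  rw [tsum_pow_sq_mul_zpow_eq_cosKernel a ht] at htriple
  refine (Complex.isometry_ofReal.isUniformInducing.isInducing.hasProd_iff
    (g := Complex.ofRealHom) _ _).1 (htriple.congr_fun fun k => ?_)
  have hcos : 2 * Complex.cos (2 * Real.pi * a) = Complex.exp (2 * Real.pi * Complex.I * a) +
      (Complex.exp (2 * Real.pi * Complex.I * a))⁻¹ := by
    rw [Complex.two_cos, ← Complex.exp_neg]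
    ring_nf
  have hinv := mul_inv_cancel₀ hz
  simp only [Function.comp_apply, Complex.ofRealHom_eq_coe]
  push_cast
  rw [hcos]
  linear_combination -(1 - Complex.exp (-Real.pi * t) ^ (2 * (k + 1))) *
    (Complex.exp (-Real.pi * t) ^ (2 * k + 1)) ^ 2 * hinv

/-- The kernels on the right-hand side are `θ₄(1 / x)` and `θ₃(1 / x)`. -/
lemma theta2_div_theta3_eq_cosKernel {x : ℝ} (hx : 0 < x) :
    theta2 x / theta3 x = cosKernel (1 / 2 : ℝ) (1 / x) / cosKernel (0 : ℝ) (1 / x) := by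
  rw [theta2_eq_evenKernel hx, theta3_eq_evenKernel hx, evenKernel_functional_equation,
    evenKernel_functional_equation, mul_div_mul_left]
  positivity

lemma tanh_eq_one_sub_exp_div (v : ℝ) :
    Real.tanh v = (1 - Real.exp (-2 * v)) / (1 + Real.exp (-2 * v)) := by
  rw [show -2 * v = -v + -v by ring, Real.exp_add, Real.tanh_eq, Real.exp_neg]
  field_simp

lemma hasProd_theta2_div_theta3 {x : ℝ} (hx : 0 < x) :
    HasProd (fun k : ℕ => Real.tanh ((2 * k + 1) * Real.pi / (2 * x)) ^ 2)
      (theta2 x / theta3 x) := by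
  have hx' : 0 < 1 / x := by positivity
  have hne : cosKernel (0 : ℝ) (1 / x) ≠ 0 := by
    intro h
    have := theta3_pos hx
    rw [theta3_eq_evenKernel hx, evenKernel_functional_equation, h, mul_zero] at this
    exact this.false
  rw [theta2_div_theta3_eq_cosKernel hx]
  refine ((hasProd_cosKernel (1 / 2) hx').div₀ (hasProd_cosKernel 0 hx') hne).congr_fun fun k => ?_
  have hq : Real.exp (-Real.pi * (1 / x)) ^ (2 * k + 1) =
      Real.exp (-2 * ((2 * k + 1) * Real.pi / (2 * x))) := by
    rw [← Real.exp_nat_mul]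
    congr 1
    push_cast
    field_simp
  have hfactor : 1 - Real.exp (-Real.pi * (1 / x)) ^ (2 * (k + 1)) ≠ 0 :=
    one_sub_pow_ne_zero (norm_exp_neg_pi_mul_lt_one hx')
      (Nat.mul_ne_zero two_ne_zero k.succ_ne_zero)
  rw [show 2 * Real.pi * (1 / 2) = Real.pi by ring, Real.cos_pi, mul_zero, Real.cos_zero,
    mul_div_mul_left _ _ hfactor, hq, tanh_eq_one_sub_exp_div, div_pow]
  ring_nf

end Theta

/-! ### The logarithm of the theta quotient -/

lemma strictConvexOn_sinh : StrictConvexOn ℝ (Set.Ici 0) Real.sinh := by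
  refine StrictMonoOn.strictConvexOn_of_deriv (convex_Ici 0) Real.continuous_sinh.continuousOn ?_
  rw [Real.deriv_sinh]
  exact Real.cosh_strictMonoOn.mono interior_subset

lemma strictAntiOn_div_sinh : StrictAntiOn (fun x => x / Real.sinh x) (Set.Ioi 0) := by
  intro x (hx : 0 < x) y (hy : 0 < y) hxy
  have hsecant :=
    strictConvexOn_sinh.secant_strict_mono Set.self_mem_Ici hx.le hy.le hx.ne' hy.ne' hxy
  simp only [Real.sinh_zero, sub_zero] at hsecant
  simpa only [inv_div] using inv_strictAnti₀ (div_pos (Real.sinh_pos_iff.2 hx) hx) hsecant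

lemma div_sinh_le_two_mul_exp {x : ℝ} (hx : 0 < x) :
    x / Real.sinh x ≤ 2 * Real.exp (-(x / 2)) := by
  have hself : x / 2 ≤ Real.sinh (x / 2) := Real.self_le_sinh_iff.2 (by positivity)
  have hexp : 1 ≤ Real.exp (-(x / 2)) * (2 * Real.cosh (x / 2)) := by
    rw [Real.cosh_eq, mul_div_cancel₀ _ two_ne_zero, mul_add, ← Real.exp_add, neg_add_cancel,
      Real.exp_zero]
    exact le_add_of_nonneg_right (by positivity)
  rw [div_le_iff₀ (Real.sinh_pos_iff.2 hx)]
  calc x = 2 * (x / 2) * 1 := by ring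
    _ ≤ 2 * Real.sinh (x / 2) * (Real.exp (-(x / 2)) * (2 * Real.cosh (x / 2))) := by gcongr
    _ = 2 * Real.exp (-(x / 2)) * (2 * Real.sinh (x / 2) * Real.cosh (x / 2)) := by ring
    _ = 2 * Real.exp (-(x / 2)) * Real.sinh x := by
      rw [← Real.sinh_two_mul, mul_div_cancel₀ x two_ne_zero]

lemma hasDerivAt_log_tanh {v : ℝ} (hv : 0 < v) :
    HasDerivAt (fun v => Real.log (Real.tanh v)) (2 / Real.sinh (2 * v)) v := by
  have hs := (Real.sinh_pos_iff.2 hv).ne'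
  have hc := (Real.cosh_pos v).ne'
  refine (((Real.hasDerivAt_sinh v).log hs).sub ((Real.hasDerivAt_cosh v).log hc)).congr_deriv ?_
    |>.congr_of_eventuallyEq ?_
  · rw [Real.sinh_two_mul]
    field_simp
    linarith [Real.cosh_sq v]
  · filter_upwards [eventually_gt_nhds hv] with w hw
    rw [Real.tanh_eq_sinh_div_cosh,
      Real.log_div (Real.sinh_pos_iff.2 hw).ne' (Real.cosh_pos w).ne', Pi.sub_apply]

lemma hasDerivAt_two_mul_log_tanh_exp_neg {w : ℝ} (hw : 0 < w) (s : ℝ) :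
    HasDerivAt (fun s => 2 * Real.log (Real.tanh (w * Real.exp (-s) / 2)))
      (-2 * (w * Real.exp (-s) / Real.sinh (w * Real.exp (-s)))) s := by
  have hinner : HasDerivAt (fun s => w * Real.exp (-s) / 2) (-(w * Real.exp (-s) / 2)) s :=
    (((hasDerivAt_neg' s).exp.const_mul w).div_const 2).congr_deriv (by ring)
  refine (((hasDerivAt_log_tanh (by positivity)).comp s hinner).const_mul 2).congr_deriv ?_
  rw [mul_div_cancel₀ _ two_ne_zero]
  ring

lemma hasSum_log_of_hasProd {ι : Type*} {f : ι → ℝ} {a : ℝ} (h : HasProd f a) (ha : a ≠ 0) :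
    HasSum (fun i => Real.log (f i)) (Real.log a) := by
  have hf (i : ι) : f i ≠ 0 := fun hi => ha (h.unique (hasProd_zero_of_exists_eq_zero ⟨i, hi⟩))
  exact ((Real.continuousAt_log ha).tendsto.comp h).congr fun s => Real.log_prod fun i _ => hf i

/-- The logarithm of `θ₂ / θ₃` in the multiplicative coordinate `x = e ^ s`, in which a dilation
of `x` becomes a translation of `s`. -/
noncomputable def logThetaRatio (s : ℝ) : ℝ :=
  Real.log (theta2 (Real.exp s) / theta3 (Real.exp s))

lemma exp_logThetaRatio (s : ℝ) :
    Real.exp (logThetaRatio s) = theta2 (Real.exp s) / theta3 (Real.exp s) :=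
  Real.exp_log (div_pos (theta2_pos (Real.exp_pos s)) (theta3_pos (Real.exp_pos s)))

lemma hasSum_logThetaRatio (s : ℝ) :
    HasSum (fun k : ℕ => 2 * Real.log (Real.tanh ((2 * k + 1) * Real.pi * Real.exp (-s) / 2)))
      (logThetaRatio s) := by
  have hx := Real.exp_pos s
  refine (hasSum_log_of_hasProd (hasProd_theta2_div_theta3 hx)
    (div_pos (theta2_pos hx) (theta3_pos hx)).ne').congr_fun fun k => ?_
  rw [Real.log_pow, Real.exp_neg, Nat.cast_ofNat]
  congr 3
  field_simp

lemma norm_neg_two_mul_div_sinh_le {w s r : ℝ} (hw : 0 < w) (hsr : s ≤ r) :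
    ‖-2 * (w * Real.exp (-s) / Real.sinh (w * Real.exp (-s)))‖ ≤
      4 * Real.exp (-(w * Real.exp (-r) / 2)) := by
  have hpos : 0 < w * Real.exp (-s) := by positivity
  have hratio := div_nonneg hpos.le (Real.sinh_pos_iff.2 hpos).le
  rw [norm_mul, Real.norm_of_nonneg hratio, norm_neg, RCLike.norm_ofNat]
  calc _ ≤ 2 * (2 * Real.exp (-(w * Real.exp (-s) / 2))) := by
        gcongr
        exact div_sinh_le_two_mul_exp hpos
    _ = 4 * Real.exp (-(w * Real.exp (-s) / 2)) := by ring
    _ ≤ 4 * Real.exp (-(w * Real.exp (-r) / 2)) := by gcongr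

lemma summable_exp_neg_odd_mul {c : ℝ} (hc : 0 < c) :
    Summable fun k : ℕ => Real.exp (-((2 * k + 1) * c)) := by
  have hodd : Function.Injective fun k : ℕ => 2 * k + 1 := fun a b h => by simpa using h
  refine ((Real.summable_exp_nat_mul_iff.2 (neg_lt_zero.2 hc)).comp_injective hodd).congr
    fun k => ?_
  simp

lemma summable_four_mul_exp_neg (r : ℝ) :
    Summable fun k : ℕ => 4 * Real.exp (-((2 * k + 1) * Real.pi * Real.exp (-r) / 2)) := by
  refine ((summable_exp_neg_odd_mul (c := Real.pi * Real.exp (-r) / 2) (by positivity)).mul_left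
    4).congr fun k => ?_
  ring_nf

lemma summable_neg_two_mul_div_sinh (s : ℝ) :
    Summable fun k : ℕ => -2 * ((2 * k + 1) * Real.pi * Real.exp (-s) /
      Real.sinh ((2 * k + 1) * Real.pi * Real.exp (-s))) :=
  .of_norm_bounded (summable_four_mul_exp_neg s) fun _ =>
    norm_neg_two_mul_div_sinh_le (by positivity) le_rfl

lemma hasDerivAt_logThetaRatio (s : ℝ) :
    HasDerivAt logThetaRatio (∑' k : ℕ, -2 * ((2 * k + 1) * Real.pi * Real.exp (-s) /
      Real.sinh ((2 * k + 1) * Real.pi * Real.exp (-s)))) s := by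
  have hmem : s ∈ Set.Iio (s + 1) := lt_add_one s
  rw [show logThetaRatio = _ from funext fun s => (hasSum_logThetaRatio s).tsum_eq.symm]
  exact hasDerivAt_tsum_of_isPreconnected (summable_four_mul_exp_neg (s + 1)) isOpen_Iio
    isPreconnected_Iio (fun k t _ => hasDerivAt_two_mul_log_tanh_exp_neg (by positivity) t)
    (fun k t (ht : t < s + 1) => norm_neg_two_mul_div_sinh_le (by positivity) ht.le)
    hmem (hasSum_logThetaRatio s).summable hmem

lemma strictAnti_neg_two_mul_div_sinh {w : ℝ} (hw : 0 < w) :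
    StrictAnti fun s => -2 * (w * Real.exp (-s) / Real.sinh (w * Real.exp (-s))) := by
  intro s t hst
  refine mul_lt_mul_of_neg_left (strictAntiOn_div_sinh ?_ ?_ ?_) (by norm_num)
  · exact Set.mem_Ioi.2 (by positivity)
  · exact Set.mem_Ioi.2 (by positivity)
  · gcongr

lemma strictAnti_deriv_logThetaRatio : StrictAnti (deriv logThetaRatio) := by
  intro s t hst
  rw [(hasDerivAt_logThetaRatio s).deriv, (hasDerivAt_logThetaRatio t).deriv]
  have hterm (k : ℕ) :=
    strictAnti_neg_two_mul_div_sinh (by positivity : 0 < (2 * k + 1) * Real.pi) hst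
  exact Summable.tsum_lt_tsum (fun k => (hterm k).le) (hterm 0) (summable_neg_two_mul_div_sinh t)
    (summable_neg_two_mul_div_sinh s)

/-! ### Sums of a function along affine lines -/

section Calculus

variable {ι : Type*} [Fintype ι] {f : ℝ → ℝ}

lemma hasDerivAt_sum_comp_mul_add (hf : Differentiable ℝ f) (l a : ι → ℝ) (t : ℝ) :
    HasDerivAt (fun t => ∑ i, f (l i * t + a i)) (∑ i, deriv f (l i * t + a i) * l i) t :=
  .fun_sum fun i _ => (hf _).hasDerivAt.comp t <| by
    simpa using ((hasDerivAt_id' t).const_mul (l i)).add_const (a i)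

lemma strictAnti_comp_mul_add_mul {g : ℝ → ℝ} (hg : StrictAnti g) {m : ℝ} (hm : m ≠ 0) (b : ℝ) :
    StrictAnti fun t => g (m * t + b) * m := by
  intro s t hst
  rcases hm.lt_or_gt with hm | hm
  · exact mul_lt_mul_of_neg_right (hg (by gcongr ?_ + b; exact mul_lt_mul_of_neg_left hst hm)) hm
  · exact mul_lt_mul_of_pos_right (hg (by gcongr)) hm

lemma strictAnti_deriv_sum_comp_mul_add (hf : Differentiable ℝ f) (hf' : StrictAnti (deriv f))
    {l : ι → ℝ} (hl : ∃ i, l i ≠ 0) (a : ι → ℝ) :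
    StrictAnti (deriv fun t => ∑ i, f (l i * t + a i)) := by
  intro s t hst
  rw [(hasDerivAt_sum_comp_mul_add hf l a s).deriv, (hasDerivAt_sum_comp_mul_add hf l a t).deriv]
  obtain ⟨i₀, hi₀⟩ := hl
  refine sum_lt_sum (fun i _ => ?_)
    ⟨i₀, mem_univ _, strictAnti_comp_mul_add_mul hf' hi₀ (a i₀) hst⟩
  rcases eq_or_ne (l i) 0 with h | h
  · simp [h]
  · exact (strictAnti_comp_mul_add_mul hf' h (a i) hst).le

lemma deriv_sum_comp_mul_add_zero (hf : Differentiable ℝ f) {l : ι → ℝ} (hl : ∑ i, l i = 0)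
    (b : ℝ) :
    deriv (fun t => ∑ i, f (l i * t + b)) 0 = 0 := by
  rw [(hasDerivAt_sum_comp_mul_add hf l (fun _ => b) 0).deriv]
  simp_rw [mul_zero, zero_add, ← mul_sum, hl, mul_zero]

lemma lt_of_strictAnti_deriv {x y : ℝ} (hf : Continuous f) (hf' : StrictAnti (deriv f))
    (hx : deriv f x = 0) (hxy : y ≠ x) : f y < f x := by
  rcases hxy.lt_or_gt with h | h
  · refine strictMonoOn_of_deriv_pos (convex_Iic x) hf.continuousOn (fun z hz => ?_) h.le
      Set.self_mem_Iic h
    rw [interior_Iic] at hz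
    exact hx ▸ hf' hz
  · refine strictAntiOn_of_deriv_neg (convex_Ici x) hf.continuousOn (fun z hz => ?_)
      Set.self_mem_Ici h.le h
    rw [interior_Ici] at hz
    exact hx ▸ hf' hz

end Calculus

lemma prod_theta2_div_theta3_eq_exp {ι : Type*} [Fintype ι] {α : ℝ} (hα : 0 < α) {c : ι → ℝ}
    (hc : ∀ i, 0 < c i) (t : ℝ) :
    ∏ i, theta2 (c i ^ t * α) / theta3 (c i ^ t * α) =
      Real.exp (∑ i, logThetaRatio (Real.log (c i) * t + Real.log α)) := by
  rw [Real.exp_sum]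
  refine prod_congr rfl fun i _ => ?_
  rw [exp_logThetaRatio, Real.exp_add, Real.exp_log hα, ← Real.rpow_def_of_pos (hc i)]

/-- with `c_i > 0`, `∏ c_i = 1`, not all `c_i = 1`, the function
`Q(t) = ∏ θ₂(c_i^t α)/θ₃(c_i^t α)` satisfies `Q'(0)=0`, `Q' > 0` on `t<0`, `Q' < 0` on
`t>0`; in particular `t = 0` is the unique strict maximum of `Q`. -/
theorem Q_unique_maximum
    (d : ℕ) (hd : 1 ≤ d) (α : ℝ) (hα : 0 < α)
    (c : Fin d → ℝ) (hc : ∀ i, 0 < c i) (hprod : ∏ i, c i = 1)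
    (hne : ¬ ∀ i, c i = 1)
    (Q : ℝ → ℝ)
    (hQ : ∀ t : ℝ, Q t = ∏ i, theta2 (Real.rpow (c i) t * α) / theta3 (Real.rpow (c i) t * α)) :
    deriv Q 0 = 0 ∧ (∀ t : ℝ, t < 0 → 0 < deriv Q t) ∧
      (∀ t : ℝ, 0 < t → deriv Q t < 0) ∧ (∀ t : ℝ, t ≠ 0 → Q t < Q 0) := by
  have hsum : ∑ i, Real.log (c i) = 0 := by
    rw [← Real.log_prod fun i _ => (hc i).ne', hprod, Real.log_one]
  have hlog : ∃ i, Real.log (c i) ≠ 0 := by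
    by_contra! h
    exact hne fun i => Real.eq_one_of_pos_of_log_eq_zero (hc i) (h i)
  have hdiff : Differentiable ℝ logThetaRatio := fun s =>
    (hasDerivAt_logThetaRatio s).differentiableAt
  set G : ℝ → ℝ := fun t => ∑ i, logThetaRatio (Real.log (c i) * t + Real.log α)
  have hG : Differentiable ℝ G := fun t =>
    (hasDerivAt_sum_comp_mul_add hdiff _ _ t).differentiableAt
  have hG' : StrictAnti (deriv G) :=
    strictAnti_deriv_sum_comp_mul_add hdiff strictAnti_deriv_logThetaRatio hlog _
  have hG₀ : deriv G 0 = 0 := deriv_sum_comp_mul_add_zero hdiff hsum _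
  obtain rfl : Q = fun t => Real.exp (G t) :=
    funext fun t => (hQ t).trans (prod_theta2_div_theta3_eq_exp hα hc t)
  have hderiv (t : ℝ) : deriv (fun t => Real.exp (G t)) t = Real.exp (G t) * deriv G t :=
    (hG t).hasDerivAt.exp.deriv
  refine ⟨?_, fun t ht => ?_, fun t ht => ?_, fun t ht => ?_⟩
  · rw [hderiv, hG₀, mul_zero]
  · exact hderiv t ▸ mul_pos (Real.exp_pos _) (hG₀ ▸ hG' ht)
  · exact hderiv t ▸ mul_neg_of_pos_of_neg (Real.exp_pos _) (hG₀ ▸ hG' ht)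
  · exact Real.exp_lt_exp.2 (lt_of_strictAnti_deriv hG.continuous hG' hG₀ ht)
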